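/- Let (X, 𝓘) be a Polish ideal space and let 𝓐 ⊆ 𝓘 be a point-finite cover of X: ⋃𝓐 = X and for every x ∈ X the set {A ∈ 𝓐 : x ∈ A} is finite. Then there is a subfamily 𝓐₀ ⊆ 𝓐 such that ⋃𝓐₀ does not belong to the 𝓘-completion B̄(X). -/

import Mathlib

open Set MeasureTheory

/-- Splitting lemma for the perfect set theorem for analytic sets. -/
theorem aux_split {α X : Type} [MetricSpace α] [SecondCountableTopology α]
    [TopologicalSpace X] [T2Space X] {f : α → X} (hf : Continuous f) {E : Set α}
    (hE : IsClosed E) (hu : ¬ (f '' E).Countable) {ε : ENNReal} (hε : 0 < ε) :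
    ∃ C₀ C₁ : Set α, (IsClosed C₀ ∧ ¬ (f '' C₀).Countable ∧ C₀ ⊆ E ∧ Metric.ediam C₀ ≤ ε) ∧
      (IsClosed C₁ ∧ ¬ (f '' C₁).Countable ∧ C₁ ⊆ E ∧ Metric.ediam C₁ ≤ ε) ∧
      Disjoint (f '' C₀) (f '' C₁) := by
  classical
  let B := TopologicalSpace.countableBasis α
  have hB : TopologicalSpace.IsTopologicalBasis B := TopologicalSpace.isBasis_countableBasis α
  let Bad : Set X := ⋃ b ∈ {b ∈ B | (f '' (E ∩ b)).Countable}, f '' (E ∩ b)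
  have hBad : Bad.Countable := by
    refine Set.Countable.biUnion ?_ (fun b hb => hb.2)
    exact (TopologicalSpace.countable_countableBasis α).mono (fun b hb => hb.1)
  have key : ∀ p ∈ E, f p ∉ Bad → ∀ V ∈ nhds p, ¬ (f '' (E ∩ V)).Countable := by
    intro p hp hpB V hV hc
    obtain ⟨b, hb, hpb, hbV⟩ := hB.mem_nhds_iff.1 hV
    apply hpB
    refine mem_biUnion (x := b) ⟨hb, hc.mono ?_⟩ ⟨p, ⟨hp, hpb⟩, rfl⟩
    exact image_mono (inter_subset_inter_right _ hbV)
  obtain ⟨p, hp, hpB⟩ : ∃ p ∈ E, f p ∉ Bad := by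
    by_contra! h
    exact hu (hBad.mono (by rintro _ ⟨p, hp, rfl⟩; exact h p hp))
  obtain ⟨q, hq, hqB⟩ : ∃ q ∈ E, f q ∉ insert (f p) Bad := by
    by_contra! h
    exact hu ((hBad.insert (f p)).mono (by rintro _ ⟨p, hp, rfl⟩; exact h p hp))
  rw [mem_insert_iff, not_or] at hqB
  obtain ⟨V, W, hV, hW, hpV, hqW, hVW⟩ := t2_separation (Ne.symm hqB.1)
  have mk : ∀ p ∈ E, f p ∉ Bad → ∀ V : Set X, IsOpen V → f p ∈ V →
      ∃ C : Set α, (IsClosed C ∧ ¬ (f '' C).Countable ∧ C ⊆ E ∧ Metric.ediam C ≤ ε) ∧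
        f '' C ⊆ V := by
    intro p hp hpB V hV hpV
    have h1 : f ⁻¹' V ∈ nhds p := hf.continuousAt.preimage_mem_nhds (hV.mem_nhds hpV)
    obtain ⟨δ, hδ, hδV⟩ := Metric.nhds_basis_closedEBall.mem_iff.1 h1
    have hmin : 0 < min δ (ε / 2) := lt_min hδ (ENNReal.half_pos hε.ne')
    refine ⟨E ∩ Metric.closedEBall p (min δ (ε / 2)), ⟨hE.inter Metric.isClosed_closedEBall,
      key p hp hpB _ (Metric.closedEBall_mem_nhds p hmin), inter_subset_left, ?_⟩, ?_⟩
    · refine (Metric.ediam_mono inter_subset_right).trans (Metric.ediam_closedEBall_le.trans ?_)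
      calc 2 * min δ (ε / 2) ≤ 2 * (ε / 2) := by gcongr; exact min_le_right _ _
        _ = ε := ENNReal.mul_div_cancel (by simp) (by simp)
    · rintro _ ⟨x, hx, rfl⟩
      exact hδV (Metric.closedEBall_subset_closedEBall (min_le_left _ _) hx.2)
  obtain ⟨C₀, h0, h0V⟩ := mk p hp hpB V hV hpV
  obtain ⟨C₁, h1, h1W⟩ := mk q hq hqB.2 W hW hqW
  exact ⟨C₀, C₁, h0, h1, hVW.mono h0V h1W⟩

open CantorScheme Filter in
/-- Cantor scheme argument. -/
theorem aux_cantor {α X : Type} [MetricSpace α] [CompleteSpace α] [SecondCountableTopology α]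
    [TopologicalSpace X] [T2Space X] {f : α → X} (hf : Continuous f)
    (hu : ¬ (range f).Countable) :
    ∃ g : (ℕ → Bool) → α, Function.Injective (f ∘ g) := by
  obtain ⟨u, -, upos', hu0⟩ := exists_seq_strictAnti_tendsto' (zero_lt_one' ENNReal)
  have upos := fun n => (upos' n).1
  let P := Subtype fun E : Set α => IsClosed E ∧ ¬ (f '' E).Countable
  choose C0 C1 h0 h1 hdisj using
    fun {C : Set α} (hC : IsClosed C) (hn : ¬ (f '' C).Countable) {ε : ENNReal} (hε : 0 < ε) =>
    aux_split hf hC hn hε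
  let DP : List Bool → P := fun l => by
    induction l with
    | nil => exact ⟨univ, ⟨isClosed_univ, by rwa [image_univ]⟩⟩
    | cons a l ih =>
      cases a
      · use C0 ih.property.1 ih.property.2 (upos (l.length + 1))
        exact ⟨(h0 _ _ _).1, (h0 _ _ _).2.1⟩
      use C1 ih.property.1 ih.property.2 (upos (l.length + 1))
      exact ⟨(h1 _ _ _).1, (h1 _ _ _).2.1⟩
  let D : List Bool → Set α := fun l => (DP l).val
  have hanti : ClosureAntitone D := by
    refine Antitone.closureAntitone ?_ fun l => (DP l).property.1
    intro l a
    cases a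
    · exact (h0 _ _ _).2.2.1
    exact (h1 _ _ _).2.2.1
  have hdiam : VanishingDiam D := by
    intro x
    apply tendsto_of_tendsto_of_tendsto_of_le_of_le' tendsto_const_nhds hu0
    · simp
    rw [eventually_atTop]
    refine ⟨1, fun m (hm : 1 ≤ m) => ?_⟩
    rw [Nat.one_le_iff_ne_zero] at hm
    rcases Nat.exists_eq_succ_of_ne_zero hm with ⟨n, rfl⟩
    dsimp
    cases x n
    · convert! (h0 _ _ _).2.2.2
      rw [PiNat.res_length]
    convert! (h1 _ _ _).2.2.2
    rw [PiNat.res_length]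
  have hdisj2 : ∀ l : List Bool, ∀ a b : Bool, a ≠ b →
      Disjoint (f '' D (a :: l)) (f '' D (b :: l)) := by
    rintro l (a | a) (b | b) hab <;> try contradiction
    · exact hdisj _ _ _
    exact (hdisj _ _ _).symm
  have hdom : ∀ {x : ℕ → Bool}, x ∈ (inducedMap D).1 := fun {x} => by
    rw [hanti.map_of_vanishingDiam hdiam fun l => ?_]
    · apply mem_univ
    · by_contra hne
      rw [not_nonempty_iff_eq_empty] at hne
      have := (DP l).property.2
      apply this
      change (f '' D l).Countable
      rw [hne]
      simp
  refine ⟨fun x => (inducedMap D).2 ⟨x, hdom⟩, ?_⟩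
  intro x y hxy
  apply PiNat.res_injective
  ext n : 1
  induction n with
  | zero => simp
  | succ n ih =>
    simp only [PiNat.res_succ, List.cons.injEq]
    refine ⟨?_, ih⟩
    by_contra hne
    have hd := hdisj2 (PiNat.res x n) _ _ hne
    refine Set.disjoint_left.1 hd ⟨(inducedMap D).2 ⟨x, hdom⟩, ?_, rfl⟩
      ⟨(inducedMap D).2 ⟨y, hdom⟩, ?_, hxy.symm⟩
    · rw [← PiNat.res_succ]
      exact map_mem ⟨x, hdom⟩ (n + 1)
    · rw [ih, ← PiNat.res_succ]
      exact map_mem ⟨y, hdom⟩ (n + 1)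

/-- Uncountable analytic sets have cardinality at least continuum. -/
theorem aux_analytic {X : Type} [TopologicalSpace X] [T2Space X] {S : Set X}
    (hS : AnalyticSet S) (hu : ¬ S.Countable) : Cardinal.continuum ≤ Cardinal.mk S := by
  rw [AnalyticSet] at hS
  rcases hS with rfl | ⟨f, hf, rfl⟩
  · exact absurd countable_empty hu
  let := TopologicalSpace.upgradeIsCompletelyMetrizable (ℕ → ℕ)
  obtain ⟨g, hg⟩ := aux_cantor hf hu
  have : Cardinal.mk (ℕ → Bool) ≤ Cardinal.mk (range f) :=
    Cardinal.mk_le_of_injective (f := fun x => (⟨f (g x), mem_range_self _⟩ : range f))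
      (fun x y h => hg (congrArg Subtype.val h))
  simpa using this

/-- Injective transversal of a family of at most `κ` sets of size at least `κ`. -/
theorem aux_transversal {ι X : Type} (S : ι → Set X) (κ : Cardinal.{0})
    (hι : Cardinal.mk ι ≤ κ) (hS : ∀ i, κ ≤ Cardinal.mk (S i)) :
    ∃ g : ι → X, Function.Injective g ∧ ∀ i, g i ∈ S i := by
  classical
  obtain ⟨_, _, ho⟩ := Cardinal.exists_ord_eq_type_lt ι
  have step : ∀ (i : ι) (h : ∀ j, j < i → X), ∃ x ∈ S i, ∀ j hj, h j hj ≠ x := by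
    intro i h
    by_contra! hc
    have h1 : Cardinal.mk (S i) ≤ Cardinal.mk (Iio i) := by
      refine (Cardinal.mk_le_mk_of_subset (t := range fun j : Iio i => h j.1 j.2) ?_).trans
        Cardinal.mk_range_le
      intro x hx
      obtain ⟨j, hj, e⟩ := hc x hx
      exact ⟨⟨j, hj⟩, e⟩
    exact absurd (((hS i).trans h1).trans_lt (Cardinal.mk_Iio_lt i ho)) (not_lt.2 hι)
  choose F hF1 hF2 using step
  let g : ι → X := (wellFounded_lt (α := ι)).fix F
  have hg : ∀ i, g i = F i (fun j _ => g j) := fun i => WellFounded.fix_eq _ _ _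
  refine ⟨g, ?_, fun i => by rw [hg]; exact hF1 _ _⟩
  have hlt : ∀ i j, i < j → g i ≠ g j := by
    intro i j hij
    rw [hg j]
    exact hF2 j (fun j _ => g j) i hij
  intro i j e
  rcases lt_trichotomy i j with h | h | h
  · exact absurd e (hlt i j h)
  · exact h
  · exact absurd e.symm (hlt j i h)

/-- Infinitely many pairwise disjoint Bernstein-like sets. -/
theorem aux_bernstein {X : Type} [TopologicalSpace X] [PolishSpace X]
    [MeasurableSpace X] [BorelSpace X] :
    ∃ Y : ℕ → Set X, (∀ i j x, x ∈ Y i → x ∈ Y j → i = j) ∧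
      ∀ i, ∀ E : Set (X × X), MeasurableSet E → (∀ y ∈ Prod.snd '' E, y ∉ Y i) →
        (Prod.snd '' E).Countable := by
  let T := {E : Set (X × X) // MeasurableSet E ∧ ¬ (Prod.snd '' E).Countable}
  have hT : Cardinal.mk (T × ℕ) ≤ Cardinal.continuum := by
    have h1 : Cardinal.mk {E : Set (X × X) | MeasurableSet E} ≤ Cardinal.continuum := by
      rw [BorelSpace.measurable_eq (α := X × X),
        (TopologicalSpace.isBasis_countableBasis (X × X)).borel_eq_generateFrom]
      apply MeasurableSpace.cardinal_measurableSet_le_continuum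
      exact (TopologicalSpace.countable_countableBasis (X × X)).le_aleph0.trans
        Cardinal.aleph0_le_continuum
    have h2 : Cardinal.mk T ≤ Cardinal.continuum :=
      (Cardinal.mk_le_mk_of_subset (s := {E : Set (X × X) | MeasurableSet E ∧
        ¬ (Prod.snd '' E).Countable}) (fun E hE => hE.1)).trans h1
    rw [Cardinal.mk_prod]
    simp only [Cardinal.lift_id, Cardinal.mk_nat]
    calc _ ≤ Cardinal.continuum * Cardinal.aleph0 := by gcongr
      _ = _ := by simp
  obtain ⟨g, hg, hgS⟩ := aux_transversal (fun p : T × ℕ => Prod.snd '' p.1.1)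
    Cardinal.continuum hT (fun p => aux_analytic
      (p.1.2.1.analyticSet_image measurable_snd) p.1.2.2)
  refine ⟨fun i => range fun E : T => g (E, i), ?_, ?_⟩
  · rintro i j x ⟨E, rfl⟩ ⟨E2, h⟩
    exact (congrArg Prod.snd (hg h)).symm
  · intro i E hE h
    by_contra hc
    exact h _ (hgS (⟨E, hE, hc⟩, i)) ⟨⟨E, hE, hc⟩, rfl⟩

theorem stmt_11 {X : Type} [TopologicalSpace X] [PolishSpace X] [Uncountable X]
    [MeasurableSpace X] [BorelSpace X]
    (𝓘 : Set (Set X))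
    (hDown : ∀ A B : Set X, A ⊆ B → B ∈ 𝓘 → A ∈ 𝓘)
    (hUnion : ∀ f : ℕ → Set X, (∀ n, f n ∈ 𝓘) → (⋃ n, f n) ∈ 𝓘)
    (hProper : (univ : Set X) ∉ 𝓘)
    (hSing : ∀ x : X, ({x} : Set X) ∈ 𝓘)
    (hBase : ∀ A ∈ 𝓘, ∃ B : Set X, A ⊆ B ∧ MeasurableSet B ∧ B ∈ 𝓘)
    (𝓐 : Set (Set X)) (h𝓐 : 𝓐 ⊆ 𝓘)
    (hcov : ⋃₀ 𝓐 = univ)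
    (hpf : ∀ x : X, {A | A ∈ 𝓐 ∧ x ∈ A}.Finite) :
    ∃ 𝓐₀ ⊆ 𝓐,
      ¬ MeasurableSet[MeasurableSpace.generateFrom ({s : Set X | MeasurableSet s} ∪ 𝓘)] (⋃₀ 𝓐₀) := by
  classical
  by_contra! hall
  have hne : Nonempty X := by
    obtain ⟨x, _⟩ := exists_pair_ne X
    exact ⟨x⟩
  have hEmpty : (∅ : Set X) ∈ 𝓘 := hDown _ _ (empty_subset _) (hSing hne.some)
  have hCU : ∀ 𝓢 : Set (Set X), 𝓢.Countable → 𝓢 ⊆ 𝓘 → ⋃₀ 𝓢 ∈ 𝓘 := by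
    intro 𝓢 hc hs
    rcases 𝓢.eq_empty_or_nonempty with rfl | hn
    · simpa using hEmpty
    obtain ⟨f, rfl⟩ := hc.exists_eq_range hn
    rw [sUnion_range]
    exact hUnion f (fun n => hs (mem_range_self n))
  have hU2 : ∀ A ∈ 𝓘, ∀ B ∈ 𝓘, A ∪ B ∈ 𝓘 := by
    intro A hA B hB
    rw [← sUnion_pair]
    refine hCU _ (by simp) ?_
    rintro s (rfl | rfl) <;> assumption
  -- structure of the completion
  have hcomp : ∀ s : Set X,
      MeasurableSet[MeasurableSpace.generateFrom ({s : Set X | MeasurableSet s} ∪ 𝓘)] s →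
      ∃ N ∈ 𝓘, MeasurableSet N ∧ MeasurableSet (s \ N) := by
    intro s hs
    induction s, hs using MeasurableSpace.generateFrom_induction with
    | hC t ht _ =>
      rcases ht with ht | ht
      · exact ⟨∅, hEmpty, MeasurableSet.empty, by simpa using ht⟩
      · obtain ⟨B, hB, hBm, hBI⟩ := hBase t ht
        exact ⟨B, hBI, hBm, by rw [sdiff_eq_empty.2 hB]; exact MeasurableSet.empty⟩
    | empty => exact ⟨∅, hEmpty, MeasurableSet.empty, by simp⟩
    | compl t ht ih =>
      obtain ⟨N, hN, hNm, hd⟩ := ih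
      refine ⟨N, hN, hNm, ?_⟩
      have : tᶜ \ N = (t \ N)ᶜ \ N := by ext x; simp only [mem_sdiff, mem_compl_iff]; tauto
      rw [this]
      exact hd.compl.diff hNm
    | iUnion s hs ih =>
      choose N hN hNm hd using ih
      refine ⟨⋃ n, N n, hUnion N hN, MeasurableSet.iUnion hNm, ?_⟩
      have : (⋃ n, s n) \ (⋃ n, N n) = (⋃ n, s n \ N n) \ (⋃ n, N n) := by
        ext x
        simp only [mem_sdiff, mem_iUnion, not_exists]
        constructor
        · rintro ⟨⟨i, hi⟩, h⟩
          exact ⟨⟨i, hi, h i⟩, h⟩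
        · rintro ⟨⟨i, hi, _⟩, h⟩
          exact ⟨⟨i, hi⟩, h⟩
      rw [this]
      exact (MeasurableSet.iUnion hd).diff (MeasurableSet.iUnion hNm)
  -- choice of a point in every nonempty set
  obtain ⟨e, he⟩ : ∃ e : Set X → X, ∀ A : Set X, A.Nonempty → e A ∈ A :=
    ⟨fun A => if h : A.Nonempty then h.some else hne.some, fun A hA => by
      simp only [hA, dif_pos]; exact hA.some_mem⟩
  let U : Set X → Set X := fun Y => ⋃₀ {A | A ∈ 𝓐 ∧ A.Nonempty ∧ e A ∈ Y}
  have hUm : ∀ Y, ∃ N ∈ 𝓘, MeasurableSet N ∧ MeasurableSet (U Y \ N) :=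
    fun Y => hcomp _ (hall _ (fun A hA => hA.1))
  choose N hNI hNm hNd using hUm
  let B := TopologicalSpace.countableBasis X
  have hB : TopologicalSpace.IsTopologicalBasis B := TopologicalSpace.isBasis_countableBasis X
  have hBc : B.Countable := TopologicalSpace.countable_countableBasis X
  let N0 : Set X := ⋃ b ∈ B, N b
  have hN0I : N0 ∈ 𝓘 := by
    have : N0 = ⋃₀ (N '' B) := by simp [N0, sUnion_image]
    rw [this]
    refine hCU _ (hBc.image N) ?_
    rintro _ ⟨b, _, rfl⟩
    exact hNI b
  have hN0m : MeasurableSet N0 := MeasurableSet.biUnion hBc (fun b _ => hNm b)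
  obtain ⟨Y, hYd, hYb⟩ := aux_bernstein (X := X)
  let D : ℕ → Set X := fun i => (U (Y i))ᶜ \ (N0 ∪ N (Y i))
  have hDm : ∀ i, MeasurableSet (D i) := by
    intro i
    have : D i = (U (Y i) \ N (Y i))ᶜ \ (N0 ∪ N (Y i)) := by
      ext x; simp only [D, mem_sdiff, mem_compl_iff, mem_union]; tauto
    rw [this]
    exact (hNd _).compl.diff (hN0m.union (hNm _))
  have hDI : ∀ i, D i ∈ 𝓘 := by
    intro i
    let E : Set (X × X) := {p | p.1 ∈ D i ∧ ∀ b ∈ B, p.2 ∈ b → p.1 ∈ U b}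
    have hEm : MeasurableSet E := by
      have : E = (Prod.fst ⁻¹' D i) ∩
          ⋂ b ∈ B, ((Prod.snd ⁻¹' bᶜ) ∪ (Prod.fst ⁻¹' (U b \ N b))) := by
        ext ⟨x, y⟩
        simp only [E, mem_ofPred, mem_inter_iff, mem_preimage, mem_iInter, mem_union,
          mem_compl_iff, mem_sdiff]
        refine and_congr_right fun hx => ?_
        refine forall₂_congr fun b hb => ?_
        have hxb : x ∉ N b := fun h => hx.2 (Or.inl (mem_biUnion hb h))
        tauto
      rw [this]
      refine (measurable_fst (hDm i)).inter (MeasurableSet.biInter hBc fun b hb => ?_)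
      exact (measurable_snd (hB.isOpen hb).measurableSet.compl).union (measurable_fst (hNd b))
    have hE1 : ∀ y ∈ Prod.snd '' E, y ∉ Y i := by
      rintro _ ⟨⟨x, y⟩, ⟨hx, hxy⟩, rfl⟩ hy
      let F : Set X := e '' {A | (A ∈ 𝓐 ∧ x ∈ A)}
      have hF : IsClosed F := ((hpf x).image e).isClosed
      have hyF : y ∈ F := by
        rw [← hF.closure_eq, hB.mem_closure_iff]
        intro b hb hyb
        obtain ⟨A, ⟨hA, _, heA⟩, hxA⟩ := hxy b hb hyb
        exact ⟨e A, heA, A, ⟨hA, hxA⟩, rfl⟩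
      obtain ⟨A, ⟨hA, hxA⟩, rfl⟩ := hyF
      exact hx.1 ⟨A, ⟨hA, ⟨x, hxA⟩, hy⟩, hxA⟩
    have hc := hYb i E hEm hE1
    have hfam : {A | A ∈ 𝓐 ∧ A.Nonempty ∧ e A ∈ Prod.snd '' E}.Countable := by
      refine (hc.biUnion (t := fun y _ => {A | A ∈ 𝓐 ∧ y ∈ A})
        (fun y _ => (hpf y).countable)).mono ?_
      rintro A ⟨hA, hAn, heA⟩
      exact mem_biUnion heA ⟨hA, he A hAn⟩
    refine hDown _ _ ?_ (hCU _ hfam (fun A hA => h𝓐 hA.1))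
    intro x hx
    obtain ⟨A, hA, hxA⟩ : x ∈ ⋃₀ 𝓐 := by rw [hcov]; trivial
    refine ⟨A, ⟨hA, ⟨x, hxA⟩, (x, e A), ⟨hx, ?_⟩, rfl⟩, hxA⟩
    intro b hb heb
    exact ⟨A, ⟨hA, ⟨x, hxA⟩, heb⟩, hxA⟩
  have hM : N0 ∪ ⋃ i, (N (Y i) ∪ D i) ∈ 𝓘 :=
    hU2 _ hN0I _ (hUnion _ fun i => hU2 _ (hNI _) _ (hDI i))
  obtain ⟨x, hx⟩ : ∃ x, x ∉ N0 ∪ ⋃ i, (N (Y i) ∪ D i) := by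
    by_contra! h
    exact hProper (hDown _ _ (fun x _ => h x) hM)
  simp only [mem_union, mem_iUnion, not_or, not_exists] at hx
  have hxU : ∀ i, x ∈ U (Y i) := by
    intro i
    by_contra h
    refine (hx.2 i).2 ⟨h, ?_⟩
    rintro (h | h)
    · exact hx.1 h
    · exact (hx.2 i).1 h
  choose A hA hxA using hxU
  have hinj : Function.Injective A := by
    intro i j hij
    refine hYd i j (e (A i)) (hA i).2.2 ?_
    rw [hij]
    exact (hA j).2.2
  have hmem : ∀ i, A i ∈ {A | A ∈ 𝓐 ∧ x ∈ A} := fun i => ⟨(hA i).1, hxA i⟩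
  exact infinite_of_injective_forall_mem hinj hmem (hpf x)
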